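/- For every k ∈ ℕ and p,q ∈ [0,1], the percolation function of anisotropic bond percolation on the slab S^k satisfies θ^{S^k}(p,q) ≥ θ^{ℤ²}(p̄(p,q)), where θ^{ℤ²}(s) is the percolation probability of the origin in independent Bernoulli bond percolation on ℤ² with parameter s, and p̄(p,q) = p · (1 − [(1−p)q̂²]^{k+1}) / (1 − (1−p)q̂²) with q̂ = 1 − (1−q)^{1/4}. -/

import Mathlib

open MeasureTheory Set
open scoped ENNReal

namespace AnisoSlab

/-! ### A concrete construction of countable products of Bernoulli measures

The product Bernoulli measure on `ι → Bool` (each coordinate `i` open with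
probability `P i`, independently) is realized as the pushforward of Lebesgue
measure on `[0,1)`: the binary digits of a uniform sample are i.i.d. fair
coins; regrouping them along a pairing function yields countably many
independent uniform samples, and comparing the `i`-th sample with `P i`
yields the desired independent Bernoulli coordinates. -/

/-- The `n`-th binary digit of `x` (digits after the binary point). -/
noncomputable def binDigit (n : ℕ) (x : ℝ) : Bool :=
  decide (⌊x * 2 ^ (n + 1)⌋ % 2 = 1)

/-- Countably many independent uniform-`[0,1]` samples extracted from a single
uniform sample `x` on `[0,1)`, by regrouping its binary digits. -/
noncomputable def unifSample (i : ℕ) (x : ℝ) : ℝ :=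
  ∑' n : ℕ, if binDigit (Nat.pair i n) x then ((2 : ℝ) ^ (n + 1))⁻¹ else 0

/-- The product Bernoulli measure on `ι → Bool`, coordinate `i` being `true`
with probability `P i`, independently over `i`. -/
noncomputable def bernoulliProduct {ι : Type*} [Encodable ι] (P : ι → ℝ) :
    Measure (ι → Bool) :=
  Measure.map (fun x i => decide (unifSample (Encodable.encode i) x < P i))
    (volume.restrict (Set.Ico (0 : ℝ) 1))

/-! ### The slab `S^k` and anisotropic bond percolation on it -/

/-- Ambient vertices: `ℤ³`; the slab `S^k` uses those with third coordinate in `{0, …, k}`. -/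
abbrev Vtx : Type := ℤ × ℤ × ℤ

/-- The three unit coordinate vectors. -/
def dvec : Fin 3 → Vtx
  | 0 => (1, 0, 0)
  | 1 => (0, 1, 0)
  | 2 => (0, 0, 1)

/-- A bond is indexed by its lower endpoint `v` and a direction `i`; it joins
`v` to `v + dvec i`. Directions `0, 1` give radial (horizontal) bonds, and
direction `2` gives axial (vertical) bonds. -/
abbrev EdgeIdx : Type := Vtx × Fin 3

/-- A percolation configuration: each bond is open (`true`) or closed (`false`). -/
abbrev Config : Type := EdgeIdx → Bool

/-- `v` is a vertex of the slab `S^k`. -/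
def InSlab (k : ℕ) (v : Vtx) : Prop := 0 ≤ v.2.2 ∧ v.2.2 ≤ k

/-- `(v, i)` is a bond of the slab `S^k` (both endpoints lie in the slab). -/
def IsEdge (k : ℕ) (e : EdgeIdx) : Prop := InSlab k e.1 ∧ InSlab k (e.1 + dvec e.2)

/-- The measure `P_{p,q}` on configurations of `S^k`: each radial (horizontal)
bond is open with probability `p` and each axial (vertical) bond is open with
probability `q`, independently. -/
noncomputable def slabMeasure (k : ℕ) (p q : ℝ) : Measure Config :=
  bernoulliProduct (fun e => if e.2 = 2 then q else p)

/-- `x` and `y` are joined by an open bond of `S^k` in the configuration `ω`. -/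
def OpenAdj (k : ℕ) (ω : Config) (x y : Vtx) : Prop :=
  ∃ i : Fin 3,
    (y = x + dvec i ∧ IsEdge k (x, i) ∧ ω (x, i) = true) ∨
    (x = y + dvec i ∧ IsEdge k (y, i) ∧ ω (y, i) = true)

/-- The open cluster of the vertex `x` in the configuration `ω`. -/
def cluster (k : ℕ) (ω : Config) (x : Vtx) : Set Vtx :=
  {y | Relation.ReflTransGen (OpenAdj k ω) x y}

/-- The percolation function `θ(p,q) = P_{p,q}(0 ↔ ∞)`. -/
noncomputable def theta (k : ℕ) (p q : ℝ) : ℝ≥0∞ :=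
  slabMeasure k p q {ω | (cluster k ω 0).Infinite}

/-- `p_k = 1 - (1/2)^{1/(k+1)}`, the horizontal critical value at `q = 1`. -/
noncomputable def pCrit (k : ℕ) : ℝ := 1 - (1 / 2 : ℝ) ^ ((1 : ℝ) / (k + 1))

/-- The critical curve `q_c(p) = sup {q ∈ [0,1] : θ(p,q) = 0}`. -/
noncomputable def qc (k : ℕ) (p : ℝ) : ℝ :=
  sSup {q : ℝ | q ∈ Set.Icc (0 : ℝ) 1 ∧ theta k p q = 0}

/-- The critical curve `p_c(q) = sup {p ∈ [0,1] : θ(p,q) = 0}`. -/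
noncomputable def pc (k : ℕ) (q : ℝ) : ℝ :=
  sSup {p : ℝ | p ∈ Set.Icc (0 : ℝ) 1 ∧ theta k p q = 0}


/-- The two unit coordinate vectors of `ℤ²`. -/
def dvec2 : Fin 2 → ℤ × ℤ
  | 0 => (1, 0)
  | 1 => (0, 1)

/-- Bond configurations on `ℤ²`: the bond `(v, i)` joins `v` to `v + dvec2 i`. -/
abbrev ConfigZ2 : Type := (ℤ × ℤ) × Fin 2 → Bool

/-- Independent Bernoulli bond percolation on `ℤ²` with parameter `s`. -/
noncomputable def z2Measure (s : ℝ) : Measure ConfigZ2 :=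
  bernoulliProduct (fun _ => s)

/-- `x` and `y` are joined by an open bond of `ℤ²` in the configuration `ω`. -/
def OpenAdjZ2 (ω : ConfigZ2) (x y : ℤ × ℤ) : Prop :=
  ∃ i : Fin 2,
    (y = x + dvec2 i ∧ ω (x, i) = true) ∨ (x = y + dvec2 i ∧ ω (y, i) = true)

/-- The open cluster of `x` in bond percolation on `ℤ²`. -/
def clusterZ2 (ω : ConfigZ2) (x : ℤ × ℤ) : Set (ℤ × ℤ) :=
  {y | Relation.ReflTransGen (OpenAdjZ2 ω) x y}

/-- `θ^{ℤ²}(s)`: the probability that the origin lies in an infinite open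
cluster of Bernoulli bond percolation on `ℤ²` with parameter `s`. -/
noncomputable def thetaZ2 (s : ℝ) : ℝ≥0∞ :=
  z2Measure s {ω | (clusterZ2 ω 0).Infinite}

/-- `q̂ = 1 - (1-q)^{1/4}`. -/
noncomputable def qhat (q : ℝ) : ℝ := 1 - (1 - q) ^ ((1 : ℝ) / 4)

/-- `p̄(p,q) = p (1 - [(1-p) q̂²]^{k+1}) / (1 - (1-p) q̂²)`. -/
noncomputable def pbar (k : ℕ) (p q : ℝ) : ℝ :=
  p * (1 - ((1 - p) * qhat q ^ 2) ^ (k + 1)) / (1 - (1 - p) * qhat q ^ 2)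

/-! Put a ladder above each bond `e` of `ℤ²`: its rungs are the translates of `e` at heights
`0, …, k`, its rails the vertical bonds above the two endpoints of `e`. Every vertical bond of the
slab is a rail of four ladders, so split it into four independent copies, one for each, which are
open with probability `q̂` because `1 - (1 - q̂)⁴ = q`. Declare `e` open if, for some `j ≤ k`, the
rung at height `j` is open, all rungs below it are closed and all rails below it are open. For
different `j` these events are disjoint, so `e` is open with probability
`∑_{j ≤ k} p ((1 - p) q̂²)ʲ = p̄`, and different ladders share no copy, so the bonds of `ℤ²` are
independent. An open bond of `ℤ²` joins its endpoints inside the slab, so an infinite open cluster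
of `ℤ²` lifts to the slab. -/

open ProbabilityTheory unitInterval Relation

/-! ### Product measures -/

theorem infinitePi_real_pi {ι : Type*} {X : ι → Type*} [∀ i, MeasurableSpace (X i)]
    (μ : ∀ i, Measure (X i)) [∀ i, IsProbabilityMeasure (μ i)] {s : Finset ι}
    {t : ∀ i, Set (X i)} (ht : ∀ i ∈ s, MeasurableSet (t i)) :
    (Measure.infinitePi μ).real (Set.pi s t) = ∏ i ∈ s, (μ i).real (t i) := by
  simp only [measureReal_def, Measure.infinitePi_pi μ ht, ENNReal.toReal_prod]

theorem map_infinitePi_blocks {K ι κ X Y : Type*} [MeasurableSpace X] [MeasurableSpace Y]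
    (μ : K → Measure X) [∀ a, IsProbabilityMeasure (μ a)] {ρ : ι × κ → K}
    (hρ : ρ.Injective) {f : ι → (κ → X) → Y} (hf : ∀ i, Measurable (f i)) :
    (Measure.infinitePi μ).map (fun ω i ↦ f i fun c ↦ ω (ρ (i, c))) =
      Measure.infinitePi fun i ↦ (Measure.infinitePi fun c ↦ μ (ρ (i, c))).map (f i) := by
  have reindex : (Measure.infinitePi μ).map (fun ω a ↦ ω (ρ a)) =
      Measure.infinitePi fun a ↦ μ (ρ a) := Measure.map_infinitePi_infinitePi_of_inj hρ
  rw [← Measure.infinitePi_map_pi _ hf, ← Measure.infinitePi_map_curry fun i c ↦ μ (ρ (i, c)),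
    ← reindex, Measure.map_map (by fun_prop) (by fun_prop),
    Measure.map_map (by fun_prop) (by fun_prop)]
  rfl

theorem measurableSet_initial_cylinder {X : Type*} [MeasurableSpace X] [MeasurableSingletonClass X]
    (b : ℕ → X) (n : ℕ) : MeasurableSet {c : ℕ → X | ∀ i < n, c i = b i} :=
  .pi (to_countable (Iio n)) fun i _ ↦ measurableSet_singleton (b i)

theorem eq_infinitePi_of_forall_initial_cylinder {X : Type*} [MeasurableSpace X] [Countable X]
    [MeasurableSingletonClass X] {μ : ℕ → Measure X} [∀ n, IsProbabilityMeasure (μ n)]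
    {ν : Measure (ℕ → X)}
    (h : ∀ (n : ℕ) (b : ℕ → X), ν {c | ∀ i < n, c i = b i} = ∏ i ∈ Finset.range n, μ i {b i}) :
    ν = Measure.infinitePi μ := by
  refine IsProjectiveLimit.unique ((isProjectiveLimit_nat_iff
    (isProjectiveMeasureFamily_pi μ) ν).2 fun n ↦ Measure.ext_of_singleton fun b ↦ ?_)
    (Measure.isProjectiveLimit_infinitePi μ)
  let b' : ℕ → X := fun i ↦ if hi : i ∈ Finset.Iic n then b ⟨i, hi⟩ else b ⟨n, by simp⟩
  have hb' (i : Finset.Iic n) : b' i = b i := dif_pos i.2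
  have cylinder : Preorder.frestrictLe (π := fun _ ↦ X) n ⁻¹' {b} =
      {c | ∀ i < n + 1, c i = b' i} := by
    ext c
    simp only [mem_preimage, mem_singleton_iff, funext_iff, ← hb', Subtype.forall,
      Finset.mem_Iic, Preorder.frestrictLe_apply, Nat.lt_succ_iff, mem_ofPred_eq]
  rw [Measure.map_apply (Preorder.measurable_frestrictLe n) (measurableSet_singleton b), cylinder,
    h, Measure.pi_singleton, Nat.range_succ_eq_Iic, ← Finset.prod_coe_sort]
  simp only [hb']

/-! ### Bernoulli laws on `Bool` -/

theorem eq_bernoulliMeasure {μ : Measure Bool} [IsProbabilityMeasure μ] {s : I}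
    (h : μ.real {true} = s) : μ = Ber(true, false, s) := by
  have hfalse : ({false} : Set Bool) = {true}ᶜ := by
    ext b; cases b <;> simp
  refine Measure.ext_of_singleton fun b ↦ ?_
  rw [← measureReal_eq_measureReal_iff]
  cases b
  · rw [hfalse, probReal_compl_eq_one_sub (measurableSet_singleton _), h]
    simp
  · simp [h]

theorem map_decide_exists_infinitePi_bernoulliMeasure {κ : Type*} [Fintype κ] (r : I) :
    (Measure.infinitePi fun _ : κ ↦ Ber(true, false, r)).map (fun b ↦ decide (∃ c, b c = true)) =
      Ber(true, false, σ (σ r ^ Fintype.card κ)) := by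
  have hm : Measurable fun b : κ → Bool ↦ decide (∃ c, b c = true) := .of_discrete
  have := Measure.isProbabilityMeasure_map
    (μ := Measure.infinitePi fun _ : κ ↦ Ber(true, false, r)) hm.aemeasurable
  have all_closed : (fun b : κ → Bool ↦ decide (∃ c, b c = true)) ⁻¹' {true} =
      (Set.pi (Finset.univ : Finset κ) fun _ ↦ {false})ᶜ := by
    ext b; simp
  apply eq_bernoulliMeasure
  rw [map_measureReal_apply hm (measurableSet_singleton _), all_closed,
    probReal_compl_eq_one_sub .of_discrete, infinitePi_real_pi _ fun _ _ ↦ .of_discrete]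
  simp

/-! ### Binary digits of a uniform sample -/

/-- The uniform law on `[0, 1)`. -/
noncomputable def uniformIco : Measure ℝ := volume.restrict (Ico 0 1)

instance : IsProbabilityMeasure uniformIco := ⟨by simp [uniformIco]⟩

theorem measurable_decide_lt (s : ℝ) : Measurable fun u : ℝ ↦ decide (u < s) :=
  measurable_to_bool <| by
    simp only [preimage, mem_singleton_iff, decide_eq_true_eq]
    exact measurableSet_Iio

theorem map_decide_lt_uniformIco (s : I) :
    uniformIco.map (fun u ↦ decide (u < (s : ℝ))) = Ber(true, false, s) := by
  have hm := measurable_decide_lt s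
  have := Measure.isProbabilityMeasure_map (μ := uniformIco) hm.aemeasurable
  have below : (fun u : ℝ ↦ decide (u < s)) ⁻¹' {true} ∩ Ico 0 1 = Ico 0 (s : ℝ) := by
    ext u
    simp only [mem_inter_iff, mem_preimage, mem_singleton_iff, decide_eq_true_eq, mem_Ico]
    exact ⟨fun h ↦ ⟨h.2.1, h.1⟩, fun h ↦ ⟨h.2, h.1, h.2.trans_le s.2.2⟩⟩
  apply eq_bernoulliMeasure
  rw [map_measureReal_apply hm (measurableSet_singleton _), uniformIco,
    measureReal_restrict_apply (hm (measurableSet_singleton _)), below,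
    Real.volume_real_Ico_of_le s.2.1, sub_zero]

theorem floor_mul_two_pow_succ (x : ℝ) (n : ℕ) :
    ⌊x * 2 ^ (n + 1)⌋ = 2 * ⌊x * 2 ^ n⌋ + (binDigit n x).toNat := by
  have half : ⌊x * 2 ^ n⌋ = ⌊x * 2 ^ (n + 1)⌋ / 2 := by
    rw [pow_succ, ← mul_assoc]
    exact_mod_cast (Int.mul_natCast_floor_div_cancel two_ne_zero (x * 2 ^ n)).symm
  unfold binDigit
  by_cases odd : ⌊x * 2 ^ (n + 1)⌋ % 2 = 1 <;> simp only [odd, decide_true, decide_false,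
    Bool.toNat_true, Bool.toNat_false] <;> omega

theorem exists_forall_binDigit_eq_iff_floor_eq (b : ℕ → Bool) (n : ℕ) : ∃ m : ℤ, ∀ x : ℝ,
    (x ∈ Ico 0 1 ∧ ∀ i < n, binDigit i x = b i) ↔ ⌊x * 2 ^ n⌋ = m := by
  induction n with
  | zero => exact ⟨0, fun x ↦ by simp [Int.floor_eq_zero_iff]⟩
  | succ n ih =>
    obtain ⟨m, hm⟩ := ih
    refine ⟨2 * m + (b n).toNat, fun x ↦ ?_⟩
    rw [Nat.forall_lt_succ_right, ← and_assoc, hm, floor_mul_two_pow_succ]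
    cases b n <;> cases binDigit n x <;> simp only [Bool.toNat_true, Bool.toNat_false] <;> grind

theorem measurable_binDigit (n : ℕ) : Measurable (binDigit n) :=
  (Measurable.of_discrete (f := fun z : ℤ ↦ decide (z % 2 = 1))).comp (by fun_prop)

theorem measurable_binDigits : Measurable fun (x : ℝ) (n : ℕ) ↦ binDigit n x :=
  measurable_pi_lambda _ measurable_binDigit

theorem uniformIco_forall_binDigit_eq (b : ℕ → Bool) (n : ℕ) :
    uniformIco {x | ∀ i < n, binDigit i x = b i} = 2⁻¹ ^ n := by
  have hmeas : MeasurableSet {x : ℝ | ∀ i < n, binDigit i x = b i} :=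
    measurable_binDigits (measurableSet_initial_cylinder b n)
  obtain ⟨m, hm⟩ := exists_forall_binDigit_eq_iff_floor_eq b n
  have dyadic : {x | ∀ i < n, binDigit i x = b i} ∩ Ico 0 1 =
      Ico ((m : ℝ) / 2 ^ n) ((m + 1) / 2 ^ n) := by
    ext x
    rw [inter_comm, mem_Ico, div_le_iff₀ (by positivity), lt_div_iff₀ (by positivity),
      ← Int.floor_eq_iff]
    exact hm x
  rw [uniformIco, Measure.restrict_apply hmeas, dyadic, Real.volume_Ico, ← sub_div,
    add_sub_cancel_left, one_div, ← inv_pow, ENNReal.ofReal_pow (by positivity),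
    ENNReal.ofReal_inv_of_pos two_pos, ENNReal.ofReal_ofNat]

/-- The law of a sequence of independent fair coins. -/
noncomputable def fairCoins : Measure (ℕ → Bool) :=
  Measure.infinitePi fun _ ↦ uniformOn (univ : Set Bool)

theorem map_binDigits_uniformIco : uniformIco.map (fun x n ↦ binDigit n x) = fairCoins := by
  refine eq_infinitePi_of_forall_initial_cylinder fun n b ↦ ?_
  rw [Measure.map_apply measurable_binDigits (measurableSet_initial_cylinder b n),
    preimage_ofPred_eq, uniformIco_forall_binDigit_eq]
  simp only [uniformOn_univ, Measure.count_singleton, Finset.prod_const, Finset.card_range,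
    Fintype.card_bool, Nat.cast_ofNat, one_div]

/-- The number in `[0, 1]` with binary expansion `0.b₀b₁b₂…`. -/
noncomputable def binaryValue (b : ℕ → Bool) : ℝ :=
  ∑' n : ℕ, if b n then ((2 : ℝ) ^ (n + 1))⁻¹ else 0

theorem binaryValue_eq_ofDigits (b : ℕ → Bool) :
    binaryValue b = Real.ofDigits fun n ↦ if b n then (1 : Fin 2) else 0 := by
  unfold binaryValue Real.ofDigits Real.ofDigitsTerm
  congr! 2 with n
  split_ifs with h <;> simp [h]

theorem measurable_binaryValue : Measurable binaryValue := by
  rw [funext binaryValue_eq_ofDigits]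
  exact Real.continuous_ofDigits.measurable.comp <| measurable_pi_lambda _ fun n ↦
    (Measurable.of_discrete (f := fun t : Bool ↦ if t then (1 : Fin 2) else 0)).comp
      (measurable_pi_apply n)

theorem digits_two_eq_ite_binDigit {x : ℝ} (hx : 0 ≤ x) (n : ℕ) :
    Real.digits x 2 n = if binDigit n x then 1 else 0 := by
  unfold Real.digits binDigit
  rw [← Int.natCast_floor_eq_floor (by positivity : 0 ≤ x * 2 ^ (n + 1))]
  simp only [Fin.ext_iff, Fin.ofNat_eq_cast, Fin.val_natCast, Nat.cast_ofNat,
    decide_eq_true_eq]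
  split_ifs with odd <;> simp only [Fin.val_zero, Fin.val_one] <;> omega

theorem binaryValue_binDigit {x : ℝ} (hx : x ∈ Ico 0 1) :
    binaryValue (fun n ↦ binDigit n x) = x := by
  simp only [binaryValue_eq_ofDigits, ← digits_two_eq_ite_binDigit hx.1]
  exact Real.ofDigits_digits one_lt_two hx

theorem map_binaryValue_fairCoins : fairCoins.map binaryValue = uniformIco := by
  rw [← map_binDigits_uniformIco, Measure.map_map measurable_binaryValue measurable_binDigits]
  calc uniformIco.map (binaryValue ∘ fun x n ↦ binDigit n x)
      = uniformIco.map id := Measure.map_congr <|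
        (ae_restrict_mem measurableSet_Ico).mono fun _ ↦ binaryValue_binDigit
    _ = uniformIco := Measure.map_id

theorem bernoulliProduct_eq_infinitePi {ι : Type*} [Encodable ι] (P : ι → I) :
    bernoulliProduct (fun i ↦ (P i : ℝ)) = Measure.infinitePi fun i ↦ Ber(true, false, P i) := by
  have injective_regroup : (fun a : ι × ℕ ↦ Nat.pair (Encodable.encode a.1) a.2).Injective :=
    fun a b h ↦ by
      obtain ⟨hi, hn⟩ := Nat.pair_eq_pair.1 h
      exact Prod.ext (Encodable.encode_injective hi) hn
  have measurable_threshold (i : ι) :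
      Measurable fun b : ℕ → Bool ↦ decide (binaryValue b < (P i : ℝ)) :=
    (measurable_decide_lt _).comp measurable_binaryValue
  have coordinate_law (i : ι) :
      fairCoins.map (fun b ↦ decide (binaryValue b < (P i : ℝ))) = Ber(true, false, P i) := by
    rw [← map_decide_lt_uniformIco, ← map_binaryValue_fairCoins,
      Measure.map_map (measurable_decide_lt _) measurable_binaryValue]
    rfl
  calc bernoulliProduct (fun i ↦ (P i : ℝ))
      = (uniformIco.map fun x n ↦ binDigit n x).map fun b i ↦
          decide (binaryValue (fun n ↦ b (Nat.pair (Encodable.encode i) n)) < (P i : ℝ)) := by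
        rw [Measure.map_map _ measurable_binDigits]
        · rfl
        · exact measurable_pi_lambda _ fun i ↦ (measurable_threshold i).comp (by fun_prop)
    _ = Measure.infinitePi fun i ↦ fairCoins.map fun b ↦ decide (binaryValue b < (P i : ℝ)) := by
        rw [map_binDigits_uniformIco]
        exact map_infinitePi_blocks _ injective_regroup measurable_threshold
    _ = Measure.infinitePi fun i ↦ Ber(true, false, P i) := by simp only [coordinate_law]

/-! ### Measurability of percolation events -/

theorem measurable_reflTransGen {Ω V : Type*} [MeasurableSpace Ω] [Countable V]
    {R : Ω → V → V → Prop} (hR : ∀ x y, Measurable fun ω ↦ R ω x y) (x y : V) :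
    Measurable fun ω ↦ ReflTransGen (R ω) x y := by
  have chain (l : List V) : ∀ x, Measurable fun ω ↦ List.IsChain (R ω) (x :: l) := by
    induction l with
    | nil => simp
    | cons z l ih =>
      intro x
      simp only [List.isChain_cons_cons]
      exact (hR x z).and (ih z)
  have exists_chain (ω : Ω) : ReflTransGen (R ω) x y ↔
      ∃ l, List.IsChain (R ω) (x :: l) ∧ (x :: l).getLast (List.cons_ne_nil _ _) = y :=
    ⟨List.exists_isChain_cons_of_relationReflTransGen,
      fun ⟨l, hl, hy⟩ ↦ List.relationReflTransGen_of_exists_isChain_cons l hl hy⟩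
  simp only [exists_chain]
  exact .exists fun l ↦ (chain l x).and measurable_const

theorem measurableSet_infinite_clusterZ2 (x : ℤ × ℤ) :
    MeasurableSet {ω | (clusterZ2 ω x).Infinite} := by
  have adj (y z : ℤ × ℤ) : Measurable fun ω ↦ OpenAdjZ2 ω y z := by
    unfold OpenAdjZ2
    have measurable_bond (e : (ℤ × ℤ) × Fin 2) : Measurable fun ω : ConfigZ2 ↦ ω e = true :=
      Measurable.of_discrete (f := fun t : Bool ↦ t = true) |>.comp (measurable_pi_apply e)
    exact .exists fun i ↦ (measurable_const.and (measurable_bond _)).or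
      (measurable_const.and (measurable_bond _))
  exact (measurable_set_iff.2 <| measurable_reflTransGen adj x) .setOfPred_infinite

/-! ### The first crossing of a ladder -/

/-- The bonds of a ladder: `(j, none)` is the rung at height `j`, and `(j, some s)` is the bond
between heights `j` and `j + 1` of the left (`s = false`) or right (`s = true`) rail. -/
abbrev LadderBond : Type := ℕ × Option Bool

/-- The rung at height `j` is the first usable way across the ladder: it is open, the rungs below
it are closed and the rails below it are open. -/
def IsFirstCrossing (j : ℕ) (b : LadderBond → Bool) : Prop :=
  b (j, none) = true ∧ ∀ l < j, b (l, none) = false ∧ ∀ s, b (l, some s) = true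

/-- The bonds on which `IsFirstCrossing j` depends. -/
def crossingBonds (j : ℕ) : Finset LadderBond :=
  insert (j, none) (Finset.range j ×ˢ Finset.univ)

/-- The states prescribed by `IsFirstCrossing j` on `crossingBonds j`. -/
def crossingState (j : ℕ) : LadderBond → Bool
  | (l, none) => l = j
  | (_, some _) => true

theorem setOf_isFirstCrossing (j : ℕ) :
    {b | IsFirstCrossing j b} = Set.pi (crossingBonds j) fun a ↦ {crossingState j a} := by
  ext b
  simp only [IsFirstCrossing, crossingBonds, mem_ofPred_eq, Finset.coe_insert, mem_pi,
    forall_mem_insert, Finset.mem_coe, Finset.mem_product, Finset.mem_range, Finset.mem_univ,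
    and_true, Prod.forall, Option.forall, mem_singleton_iff, crossingState, decide_true]
  grind

theorem measurableSet_isFirstCrossing (j : ℕ) : MeasurableSet {b | IsFirstCrossing j b} := by
  rw [setOf_isFirstCrossing]
  exact .pi (Finset.countable_toSet _) fun _ _ ↦ .of_discrete

theorem pairwise_disjoint_isFirstCrossing :
    Pairwise (Function.onFun Disjoint fun j ↦ {b | IsFirstCrossing j b}) := by
  refine (pairwise_disjoint_on _).2 fun i j hij ↦ disjoint_left.2 fun b hi hj ↦ ?_
  exact Bool.false_ne_true ((hj.2 i hij).1.symm.trans hi.1)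

/-- The opening probability of a bond of a ladder with rung parameter `p` and rail parameter `r`. -/
def ladderParam (p r : I) : LadderBond → I
  | (_, none) => p
  | (_, some _) => r

/-- The law of a ladder with independent bonds, rung parameter `p` and rail parameter `r`. -/
noncomputable def ladderMeasure (p r : I) : Measure (LadderBond → Bool) :=
  Measure.infinitePi fun a ↦ Ber(true, false, ladderParam p r a)

instance (p r : I) : IsProbabilityMeasure (ladderMeasure p r) :=
  inferInstanceAs (IsProbabilityMeasure (Measure.infinitePi _))

theorem ladderMeasure_real_isFirstCrossing (p r : I) (j : ℕ) :
    (ladderMeasure p r).real {b | IsFirstCrossing j b} = p * ((1 - p) * r ^ 2) ^ j := by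
  have level {l : ℕ} (hl : l ∈ Finset.range j) :
      ∏ o, Ber(true, false, ladderParam p r (l, o)).real {crossingState j (l, o)} =
        (1 - p) * r ^ 2 := by
    simp [Fintype.prod_option, crossingState, ladderParam, (Finset.mem_range.1 hl).ne, pow_two]
  rw [setOf_isFirstCrossing, ladderMeasure, infinitePi_real_pi _ fun _ _ ↦ .of_discrete,
    crossingBonds, Finset.prod_insert (by simp), Finset.prod_product,
    Finset.prod_congr rfl fun _ ↦ level]
  simp [crossingState, ladderParam]

/-- The ladder has a first crossing at height at most `k`. -/
noncomputable def ladderOpen (k : ℕ) (b : LadderBond → Bool) : Bool :=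
  open scoped Classical in decide (∃ j ≤ k, IsFirstCrossing j b)

theorem ladderOpen_eq_true_iff {k : ℕ} {b : LadderBond → Bool} :
    ladderOpen k b = true ↔ ∃ j ≤ k, IsFirstCrossing j b := by
  simp [ladderOpen]

theorem preimage_ladderOpen (k : ℕ) :
    ladderOpen k ⁻¹' {true} = ⋃ j ∈ Finset.range (k + 1), {b | IsFirstCrossing j b} := by
  ext b
  simp [ladderOpen_eq_true_iff]

theorem measurable_ladderOpen (k : ℕ) : Measurable (ladderOpen k) := by
  refine measurable_to_bool ?_
  rw [preimage_ladderOpen]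
  exact Finset.measurableSet_biUnion _ fun j _ ↦ measurableSet_isFirstCrossing j

theorem sum_firstCrossing_mem_unitInterval (k : ℕ) (p r : I) :
    ∑ j ∈ Finset.range (k + 1), (p : ℝ) * ((1 - p) * r ^ 2) ^ j ∈ I := by
  let x : I := σ p * r ^ 2
  have hx : (1 - p) * r ^ 2 = (x : ℝ) := rfl
  have hp : (p : ℝ) ≤ 1 - x := le_symm_comm.1 (mul_le_left : x ≤ σ p)
  have hp0 := p.2.1
  have hx0 := x.2.1
  simp only [hx, ← Finset.mul_sum]
  refine ⟨by positivity, ?_⟩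
  calc (p : ℝ) * ∑ j ∈ Finset.range (k + 1), (x : ℝ) ^ j
      ≤ (1 - x) * ∑ j ∈ Finset.range (k + 1), (x : ℝ) ^ j := by gcongr
    _ = 1 - (x : ℝ) ^ (k + 1) := mul_neg_geom_sum _ _
    _ ≤ 1 := sub_le_self 1 (by positivity)

/-- The probability that a ladder with rung parameter `p` and rail parameter `r` has a first
crossing at height at most `k`. -/
noncomputable def crossingProb (k : ℕ) (p r : I) : I :=
  ⟨_, sum_firstCrossing_mem_unitInterval k p r⟩

theorem map_ladderOpen (k : ℕ) (p r : I) :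
    (ladderMeasure p r).map (ladderOpen k) = Ber(true, false, crossingProb k p r) := by
  have hm := measurable_ladderOpen k
  have := Measure.isProbabilityMeasure_map (μ := ladderMeasure p r) hm.aemeasurable
  apply eq_bernoulliMeasure
  rw [map_measureReal_apply hm (measurableSet_singleton _), preimage_ladderOpen,
    measureReal_biUnion_finset (fun i _ j _ hij ↦ pairwise_disjoint_isFirstCrossing hij)
      fun j _ ↦ measurableSet_isFirstCrossing j]
  simp only [ladderMeasure_real_isFirstCrossing, crossingProb]

/-! ### The parameters `q̂` and `p̄` -/

theorem qhat_mem_unitInterval {q : ℝ} (hq : q ∈ I) : qhat q ∈ I :=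
  Icc.one_sub_mem ⟨Real.rpow_nonneg (sub_nonneg.2 hq.2) _,
    Real.rpow_le_one (sub_nonneg.2 hq.2) (sub_le_self 1 hq.1) (by norm_num)⟩

theorem one_sub_qhat_pow_four {q : ℝ} (hq : q ≤ 1) : (1 - qhat q) ^ 4 = 1 - q := by
  rw [qhat, sub_sub_cancel, ← Real.rpow_mul_natCast (sub_nonneg.2 hq)]
  norm_num

theorem sum_eq_pbar (k : ℕ) {p q : ℝ} (hp : 0 ≤ p) (hq : q ∈ I) :
    ∑ j ∈ Finset.range (k + 1), p * ((1 - p) * qhat q ^ 2) ^ j = pbar k p q := by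
  rw [← Finset.mul_sum, pbar]
  by_cases h : (1 - p) * qhat q ^ 2 = 1
  · -- Here the denominator of `pbar` vanishes, but so does `p`.
    obtain ⟨hr0, hr1⟩ := qhat_mem_unitInterval hq
    have hr : qhat q ^ 2 = 1 := by nlinarith [mul_nonneg hp (sq_nonneg (qhat q))]
    have hp0 : p = 0 := by simpa [hr] using h
    simp [hp0]
  · rw [geom_sum_eq h, mul_div_assoc, ← neg_div_neg_eq, neg_sub, neg_sub]

/-! ### The coupling -/

/-- Copies of the bonds of `ℤ³`. The copy `(e, (i, s))` of a vertical bond `e` belongs to the ladder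
above the bond of `ℤ²` in direction `i` whose end `s` (see `endpoint`) lies below `e`. A horizontal
bond `e` belongs to one ladder only and is represented by the copy `(e, default)`; its other copies
are never read. -/
abbrev SplitBond : Type := EdgeIdx × (Fin 2 × Bool)

/-- The opening probability of a copy of a bond: `p` for horizontal bonds, `r` for vertical ones. -/
def splitParam (p r : I) (a : SplitBond) : I := if a.1.2 = 2 then r else p

/-- The law of independent states of all copies of bonds. -/
noncomputable def splitMeasure (p r : I) : Measure (SplitBond → Bool) :=
  Measure.infinitePi fun a ↦ Ber(true, false, splitParam p r a)

/-- The state of the slab bond `e` as a function of the states `b` of its copies. -/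
def slabState (e : EdgeIdx) (b : Fin 2 × Bool → Bool) : Bool :=
  if e.2 = 2 then decide (∃ c, b c = true) else b default

/-- The configuration of the slab determined by the states of the copies. -/
def toSlab (η : SplitBond → Bool) : Config := fun e ↦ slabState e fun c ↦ η (e, c)

theorem toSlab_vertical (η : SplitBond → Bool) (v : Vtx) :
    toSlab η (v, 2) = true ↔ ∃ c, η ((v, 2), c) = true := by
  simp [toSlab, slabState]

theorem toSlab_horizontal (η : SplitBond → Bool) (v : Vtx) (i : Fin 2) :
    toSlab η (v, i.castSucc) = η ((v, i.castSucc), default) :=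
  if_neg i.castSucc_ne_last

/-- The vertex of `ℤ³` above `x` at height `z`. -/
def atHeight (x : ℤ × ℤ) (z : ℤ) : Vtx := (x.1, x.2, z)

/-- The end of a bond of `ℤ²`: the lower one for `s = false`, the upper one for `s = true`. -/
def endpoint (e : (ℤ × ℤ) × Fin 2) (s : Bool) : ℤ × ℤ := if s then e.1 + dvec2 e.2 else e.1

/-- The copies that form the ladder above a bond of `ℤ²`. -/
def ladderBond : ((ℤ × ℤ) × Fin 2) × LadderBond → SplitBond
  | (e, (j, none)) => ((atHeight e.1 j, e.2.castSucc), default)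
  | (e, (j, some s)) => ((atHeight (endpoint e s) j, 2), (e.2, s))

theorem atHeight_inj {x y : ℤ × ℤ} {z w : ℤ} : atHeight x z = atHeight y w ↔ x = y ∧ z = w := by
  simp [atHeight, Prod.ext_iff, and_assoc]

theorem ladderBond_injective : ladderBond.Injective := by
  rintro ⟨⟨x, i⟩, j, _ | s⟩ ⟨⟨y, i'⟩, j', _ | s'⟩ h
  · simp_all [ladderBond, atHeight_inj]
  · exact absurd (congrArg (·.1.2) h) i.castSucc_ne_last
  · exact absurd (congrArg (·.1.2) h).symm i'.castSucc_ne_last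
  · simp only [ladderBond, endpoint, Prod.mk.injEq, atHeight_inj, Nat.cast_inj, and_true] at h
    obtain ⟨⟨hxy, rfl⟩, rfl, rfl⟩ := h
    cases s <;> simp_all

/-- The configuration of `ℤ²` in which a bond is open if the ladder above it has a first crossing
at height at most `k`. -/
noncomputable def toZ2 (k : ℕ) (η : SplitBond → Bool) : ConfigZ2 :=
  fun e ↦ ladderOpen k fun a ↦ η (ladderBond (e, a))

theorem measurable_toSlab : Measurable toSlab :=
  measurable_pi_lambda _ fun e ↦ (Measurable.of_discrete (f := slabState e)).comp (by fun_prop)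

theorem measurable_toZ2 (k : ℕ) : Measurable (toZ2 k) :=
  measurable_pi_lambda _ fun _ ↦ (measurable_ladderOpen k).comp (by fun_prop)

theorem map_slabState (p r : I) (e : EdgeIdx) :
    (Measure.infinitePi fun c ↦ Ber(true, false, splitParam p r (e, c))).map (slabState e) =
      Ber(true, false, if e.2 = 2 then σ (σ r ^ 4) else p) := by
  unfold slabState splitParam
  split_ifs with vertical
  · exact map_decide_exists_infinitePi_bernoulliMeasure r
  · exact Measure.infinitePi_map_eval _ _

theorem map_toSlab (k : ℕ) (p r : I) :
    (splitMeasure p r).map toSlab = slabMeasure k p (σ (σ r ^ 4) : I) := by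
  calc (splitMeasure p r).map toSlab
      = Measure.infinitePi fun e ↦
          (Measure.infinitePi fun c ↦ Ber(true, false, splitParam p r (e, c))).map (slabState e) :=
        map_infinitePi_blocks _ Function.injective_id fun _ ↦ .of_discrete
    _ = bernoulliProduct fun e ↦ ((if e.2 = 2 then σ (σ r ^ 4) else p : I) : ℝ) := by
        simp only [map_slabState, bernoulliProduct_eq_infinitePi]
    _ = slabMeasure k p (σ (σ r ^ 4) : I) := by
        simp only [slabMeasure, apply_ite Subtype.val]

theorem splitParam_ladderBond (p r : I) (e : (ℤ × ℤ) × Fin 2) (a : LadderBond) :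
    splitParam p r (ladderBond (e, a)) = ladderParam p r a := by
  rcases a with ⟨j, _ | s⟩
  · exact if_neg e.2.castSucc_ne_last
  · exact if_pos rfl

theorem map_toZ2 (k : ℕ) (p r : I) :
    (splitMeasure p r).map (toZ2 k) = z2Measure (crossingProb k p r) := by
  calc (splitMeasure p r).map (toZ2 k)
      = Measure.infinitePi fun e ↦ (Measure.infinitePi fun a ↦
          Ber(true, false, splitParam p r (ladderBond (e, a)))).map (ladderOpen k) :=
        map_infinitePi_blocks _ ladderBond_injective fun _ ↦ measurable_ladderOpen k
    _ = Measure.infinitePi fun _ ↦ Ber(true, false, crossingProb k p r) := by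
        simp only [splitParam_ladderBond, ← map_ladderOpen, ladderMeasure]
    _ = z2Measure (crossingProb k p r) := (bernoulliProduct_eq_infinitePi _).symm

/-! ### Comparison of the clusters -/

instance (k : ℕ) (ω : Config) : Std.Symm (OpenAdj k ω) :=
  ⟨fun _ _ ⟨i, h⟩ ↦ ⟨i, h.symm⟩⟩

theorem reflTransGen_openAdj_atHeight {k : ℕ} {ω : Config} {x : ℤ × ℤ} {j : ℕ} (hj : j ≤ k)
    (h : ∀ l < j, ω (atHeight x l, 2) = true) :
    ReflTransGen (OpenAdj k ω) (atHeight x 0) (atHeight x j) := by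
  induction j with
  | zero => exact .refl
  | succ j ih =>
    refine (ih (by omega) fun l hl ↦ h l (by omega)).tail
      ⟨2, .inl ⟨?_, ?_, h j j.lt_succ_self⟩⟩
    · simp [atHeight, dvec]
    · simp only [IsEdge, InSlab, atHeight, dvec, Prod.snd_add]
      omega

theorem openAdj_atHeight_add_dvec2 {k : ℕ} {ω : Config} {x : ℤ × ℤ} {i : Fin 2} {j : ℕ} (hj : j ≤ k)
    (h : ω (atHeight x j, i.castSucc) = true) :
    OpenAdj k ω (atHeight x j) (atHeight (x + dvec2 i) j) := by
  refine ⟨i.castSucc, .inl ⟨?_, ?_, h⟩⟩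
  · fin_cases i <;> simp [atHeight, dvec, dvec2]
  · fin_cases i <;> simp [IsEdge, InSlab, atHeight, dvec, hj]

theorem reflTransGen_of_toZ2 {k : ℕ} {η : SplitBond → Bool} {x : ℤ × ℤ} {i : Fin 2}
    (h : toZ2 k η (x, i) = true) :
    ReflTransGen (OpenAdj k (toSlab η)) (atHeight x 0) (atHeight (x + dvec2 i) 0) := by
  obtain ⟨j, hj, rung, below⟩ := ladderOpen_eq_true_iff.1 h
  have rail (s : Bool) : ReflTransGen (OpenAdj k (toSlab η))
      (atHeight (endpoint (x, i) s) 0) (atHeight (endpoint (x, i) s) j) :=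
    reflTransGen_openAdj_atHeight hj fun l hl ↦
      (toSlab_vertical η _).2 ⟨(i, s), (below l hl).2 s⟩
  have across : OpenAdj k (toSlab η) (atHeight x j) (atHeight (x + dvec2 i) j) :=
    openAdj_atHeight_add_dvec2 hj ((toSlab_horizontal η _ i).trans rung)
  exact ((rail false).tail across).trans (symm_of _ (rail true))

theorem reflTransGen_atHeight_of_mem_clusterZ2 {k : ℕ} {η : SplitBond → Bool} {x y : ℤ × ℤ}
    (h : y ∈ clusterZ2 (toZ2 k η) x) : atHeight y 0 ∈ cluster k (toSlab η) (atHeight x 0) := by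
  refine ReflTransGen.lift' (atHeight · 0) ?_ _ _ h
  rintro x y ⟨i, ⟨rfl, h⟩ | ⟨rfl, h⟩⟩
  · exact reflTransGen_of_toZ2 h
  · exact symm_of _ (reflTransGen_of_toZ2 h)

theorem infinite_cluster_toSlab {k : ℕ} {η : SplitBond → Bool}
    (h : (clusterZ2 (toZ2 k η) 0).Infinite) : (cluster k (toSlab η) 0).Infinite := by
  have injective : (atHeight · 0).Injective := fun _ _ h ↦ (atHeight_inj.1 h).1
  exact (h.image injective.injOn).mono <|
    image_subset_iff.2 fun _ ↦ reflTransGen_atHeight_of_mem_clusterZ2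

theorem thetaZ2_crossingProb_le_theta (k : ℕ) (p r : I) :
    thetaZ2 (crossingProb k p r) ≤ theta k p (σ (σ r ^ 4) : I) := by
  rw [thetaZ2, theta, ← map_toZ2, ← map_toSlab,
    Measure.map_apply (measurable_toZ2 k) (measurableSet_infinite_clusterZ2 0)]
  calc splitMeasure p r (toZ2 k ⁻¹' {ω | (clusterZ2 ω 0).Infinite})
      ≤ splitMeasure p r (toSlab ⁻¹' {ω | (cluster k ω 0).Infinite}) :=
        measure_mono fun _ ↦ infinite_cluster_toSlab
    _ ≤ (splitMeasure p r).map toSlab {ω | (cluster k ω 0).Infinite} :=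
        Measure.le_map_apply measurable_toSlab.aemeasurable _

/-- The slab percolation function dominates the `ℤ²` percolation function at
the renormalized parameter: `θ^{S^k}(p,q) ≥ θ^{ℤ²}(p̄(p,q))`. -/
theorem theta_ge_thetaZ2_pbar (k : ℕ) (p q : ℝ)
    (hp : p ∈ Set.Icc (0 : ℝ) 1) (hq : q ∈ Set.Icc (0 : ℝ) 1) :
    thetaZ2 (pbar k p q) ≤ theta k p q := by
  let P : I := ⟨p, hp⟩
  let r : I := ⟨qhat q, qhat_mem_unitInterval hq⟩
  have crossing : pbar k p q = crossingProb k P r := (sum_eq_pbar k hp.1 hq).symm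
  have vertical : q = (σ (σ r ^ 4) : I) := by
    simp [r, one_sub_qhat_pow_four hq.2]
  calc thetaZ2 (pbar k p q) = thetaZ2 (crossingProb k P r) := by rw [crossing]
    _ ≤ theta k P (σ (σ r ^ 4) : I) := thetaZ2_crossingProb_le_theta k P r
    _ = theta k p q := by rw [← vertical]

end AnisoSlab
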